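/- Let S be a Noetherian regular local ring of characteristic p which is F-finite, A = S⟦π⟧, and K = A_π the localization of A away from π. Let m ≥ 1 and n ≥ 0. Let φ : 𝕎 K → 𝕎 K be the map induced by the Frobenius y ↦ y^p of K (so that, after truncation, φ(b) represents the Witt vector Frobenius F(b) and b represents R(b)). Then for every b ∈ 𝕎 K: φ(b) − b satisfies fil(π^n, m) if and only if φ(b) satisfies fil(π^n, m). (This is the q = 0 case of the statement that for ω ∈ Z_1 W_m Ω^q_K, one has (1 − C)(ω) ∈ fil_n W_m Ω^q_K if and only if ω ∈ Z_1 fil_n W_m Ω^q_K, applied to ω = F(b), since (1 − C)(F(b)) = F(b) − R(b).) -/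

import Mathlib

/-- The Brylinski–Kato filtration condition on (truncated) Witt vectors, in Witt
coordinates: `a ∈ 𝕎 K` satisfies `fil(x, m)` if for every `j < m` the element
`x * (a.coeff j) ^ (p ^ (m - 1 - j))` lies in the image of `A` in `K`. -/
def WittFil (p : ℕ) [Fact p.Prime] (A : Type*) {K : Type*} [CommRing A] [CommRing K]
    [Algebra A K] (x : K) (m : ℕ) (a : WittVector p K) : Prop :=
  ∀ j < m, x * a.coeff j ^ p ^ (m - 1 - j) ∈ Set.range (algebraMap A K)

/-!
Write `π^n` for its image in `K = A[1/π]`, and `fil_n` for the Witt vectors satisfying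
`WittFil p A (π^n) m`. If `π` is a nonzerodivisor and `(π)` is radical, then `y ∈ K` lies in `A` as
soon as `π^r * y^p ∈ A` for some `r < p`. For `r = 0` this says that `A` is closed under `p`-th
roots in `K`, so that `a ∈ fil_n` if and only if `[π^n] * F^(m-1) a` has its first `m` coefficients
in `A`; hence `fil_n` is an additive group. For general `r` it shows that `F b ∈ fil_N` forces
`b ∈ fil_(N/p)`.

If `F b ∈ fil_n`, then `b ∈ fil_(n/p) ⊆ fil_n` and `F b - b ∈ fil_n`. Conversely, suppose
`F b - b ∈ fil_n`. Clearing denominators gives `b ∈ fil_N` for some `N`, and as long as `N > n`,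
`F b = (F b - b) + b ∈ fil_N` improves `N` to `N / p`. So `b ∈ fil_n`, and then `F b ∈ fil_n`.

For `A = S⟦X⟧` and `π = X`, the ideal `(π)` is radical because the regular local ring `S` is a
domain: by induction on the dimension, `S / (x)` is a domain for `x` in the maximal ideal `𝔪`
outside `𝔪²` and the minimal primes, and then Nakayama's lemma kills the minimal prime contained
in `(x)`.
-/

section RegularLocalRing

open IsLocalRing

variable {R : Type*} [CommRing R]

theorem exists_span_insert_diff_singleton_eq [IsLocalRing R] {M : Type*} [AddCommGroup M]
    [Module R M] {s : Set M} {x : M} (hx : x ∈ Submodule.span R s)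
    (hx' : x ∉ maximalIdeal R • Submodule.span R s) :
    ∃ y ∈ s, Submodule.span R (insert x (s \ {y})) = Submodule.span R s := by
  classical
  obtain ⟨c, hcs, rfl⟩ := Submodule.mem_span_set.mp hx
  obtain ⟨y, hyc, hunit⟩ : ∃ y ∈ c.support, IsUnit (c y) := by
    by_contra! hcon
    exact hx' <| Submodule.sum_mem _ fun y hy ↦
      Submodule.smul_mem_smul (hcon y hy) (Submodule.subset_span (hcs hy))
  refine ⟨y, hcs hyc, le_antisymm ?_ (Submodule.span_le.mpr fun z hz ↦ ?_)⟩
  · exact Submodule.span_le.mpr <|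
      Set.insert_subset hx (Set.sdiff_subset.trans Submodule.subset_span)
  · rcases eq_or_ne z y with rfl | hzy
    · have hcz : c z • z = (c.sum fun w r ↦ r • w) - ∑ w ∈ c.support.erase z, c w • w :=
        eq_sub_of_add_eq (Finset.add_sum_erase _ (fun w ↦ c w • w) hyc)
      rw [SetLike.mem_coe, ← Submodule.smul_mem_iff_of_isUnit _ hunit, hcz]
      exact sub_mem (Submodule.subset_span (Set.mem_insert _ _)) <| Submodule.sum_mem _ fun w hw ↦
        Submodule.smul_mem _ _ <| Submodule.subset_span <| Set.mem_insert_of_mem _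
          ⟨hcs (Finset.mem_of_mem_erase hw), Finset.ne_of_mem_erase hw⟩
    · exact Submodule.subset_span (Set.mem_insert_of_mem _ ⟨hz, hzy⟩)

theorem spanFinrank_map_quotientMk_add_one_le [IsLocalRing R] {I : Ideal R} (hI : I.FG) {x : R}
    (hx : x ∈ I) (hx' : x ∉ maximalIdeal R * I) :
    (I.map (Ideal.Quotient.mk (Ideal.span {x}))).spanFinrank + 1 ≤ I.spanFinrank := by
  obtain ⟨s, hcard, rfl⟩ := Submodule.FG.exists_span_finset_card_eq_spanFinrank hI
  obtain ⟨y, hys, hy⟩ := exists_span_insert_diff_singleton_eq hx hx'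
  have hmap : (Ideal.span (s : Set R)).map (Ideal.Quotient.mk (Ideal.span {x})) =
      Ideal.span (Ideal.Quotient.mk (Ideal.span {x}) '' (s \ {y})) := by
    have hzero : Ideal.Quotient.mk (Ideal.span {x}) x = 0 :=
      Ideal.Quotient.eq_zero_iff_mem.mpr (Ideal.mem_span_singleton_self x)
    have hspan : Ideal.span (s : Set R) = Ideal.span (insert x (s \ {y})) := hy.symm
    rw [hspan, Ideal.map_span, Set.image_insert_eq, hzero]
    exact Submodule.span_insert_zero
  have hfin : (s \ {y} : Set R).Finite := s.finite_toSet.sdiff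
  calc ((Ideal.span (s : Set R)).map (Ideal.Quotient.mk (Ideal.span {x}))).spanFinrank + 1
      ≤ (s \ {y} : Set R).ncard + 1 := by
        rw [hmap]
        gcongr
        exact (Submodule.spanFinrank_span_le_ncard_of_finite (hfin.image _)).trans
          (Set.ncard_image_le hfin)
    _ = (s : Set R).ncard := Set.ncard_sdiff_singleton_add_one hys s.finite_toSet
    _ = (Ideal.span (s : Set R)).spanFinrank := by rw [Set.ncard_coe_finset, hcard]

theorem isRegularLocalRing_quotient_span_singleton [IsRegularLocalRing R] {x : R}
    (hx : x ∈ maximalIdeal R) (hx' : x ∉ maximalIdeal R ^ 2) :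
    IsRegularLocalRing (R ⧸ Ideal.span {x}) := by
  have hproper : Ideal.span {x} ≠ ⊤ := by
    rwa [Ne, Ideal.span_singleton_eq_top, ← mem_nonunits_iff, ← mem_maximalIdeal]
  have : Nontrivial (R ⧸ Ideal.span {x}) := Ideal.Quotient.nontrivial_iff.mpr hproper
  have hsurj := Ideal.Quotient.mk_surjective (I := Ideal.span {x})
  have : IsLocalRing (R ⧸ Ideal.span {x}) := .of_surjective' _ hsurj
  apply IsRegularLocalRing.of_spanFinrank_maximalIdeal_le
  rw [← ENat.WithBot.add_le_add_one_right_iff]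
  calc ((maximalIdeal (R ⧸ Ideal.span {x})).spanFinrank : WithBot ℕ∞) + 1
      ≤ (maximalIdeal R).spanFinrank := by
        rw [← map_maximalIdeal_of_surjective _ hsurj]
        exact_mod_cast spanFinrank_map_quotientMk_add_one_le (IsNoetherian.noetherian _) hx
          (by rwa [← pow_two])
    _ = (maximalIdeal R).height := by
        rw [IsRegularLocalRing.spanFinrank_maximalIdeal, maximalIdeal_height_eq_ringKrullDim]
    _ ≤ ringKrullDim (R ⧸ Ideal.span {x}) + 1 := Ideal.height_le_ringKrullDim_quotient_add_one hx

theorem maximalIdeal_eq_bot_of_le_sq [IsNoetherianRing R] [IsLocalRing R]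
    (h : maximalIdeal R ≤ maximalIdeal R ^ 2) : maximalIdeal R = ⊥ :=
  Submodule.eq_bot_of_le_smul_of_le_jacobson_bot (maximalIdeal R) _ (IsNoetherian.noetherian _)
    (by rwa [smul_eq_mul, ← pow_two]) (maximalIdeal_le_jacobson ⊥)

theorem exists_mem_maximalIdeal_notMem_sq_notMem_minimalPrimes [IsNoetherianRing R] [IsLocalRing R]
    (h : maximalIdeal R ∉ minimalPrimes R) :
    ∃ x ∈ maximalIdeal R, x ∉ maximalIdeal R ^ 2 ∧ ∀ P ∈ minimalPrimes R, x ∉ P := by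
  by_contra! hcon
  have hcover : (maximalIdeal R : Set R) ⊆
      ⋃ I ∈ insert (maximalIdeal R ^ 2) (minimalPrimes R), (I : Set R) := fun x hx ↦ by
    by_cases hx' : x ∈ maximalIdeal R ^ 2
    · exact Set.mem_biUnion (Set.mem_insert _ _) hx'
    · obtain ⟨P, hP, hxP⟩ := hcon x hx hx'
      exact Set.mem_biUnion (Set.mem_insert_of_mem _ hP) hxP
  obtain ⟨I, hI, hle⟩ := (Ideal.subset_union_prime_finite
    ((minimalPrimes.finite_of_isNoetherianRing R).insert _) (f := id)
    (maximalIdeal R ^ 2) (maximalIdeal R ^ 2)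
    fun I hI hne _ ↦ (Set.mem_of_mem_insert_of_ne hI hne).1.1).mp hcover
  rcases hI with rfl | hI
  · have hbot := maximalIdeal_eq_bot_of_le_sq hle
    exact h ⟨⟨Ideal.IsMaximal.isPrime inferInstance, bot_le⟩, fun _ _ _ ↦ hbot ▸ bot_le⟩
  · have hprime : I.IsPrime := hI.1.1
    exact h ((le_maximalIdeal hprime.ne_top).antisymm hle ▸ hI)

theorem isDomain_of_isPrime_span_singleton [IsNoetherianRing R] {x : R}
    (hx : x ∈ Ideal.jacobson (⊥ : Ideal R)) (hx' : ∀ P ∈ minimalPrimes R, x ∉ P)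
    (hprime : (Ideal.span {x}).IsPrime) : IsDomain R := by
  obtain ⟨P, hP, hPx⟩ := Ideal.exists_minimalPrimes_le (bot_le : ⊥ ≤ Ideal.span {x})
  have hPprime : P.IsPrime := hP.1.1
  -- An element of `P` is a multiple `x * z`, and `x ∉ P` puts `z` back into `P`: so `P = x P`.
  have hPbot : P = ⊥ := by
    refine Submodule.eq_bot_of_le_smul_of_le_jacobson_bot (Ideal.span {x}) P
      (IsNoetherian.noetherian _) (fun y hy ↦ ?_) ((Ideal.span_singleton_le_iff_mem _).mpr hx)
    obtain ⟨z, rfl⟩ := Ideal.mem_span_singleton.mp (hPx hy)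
    exact Ideal.mul_mem_mul (Ideal.mem_span_singleton_self x)
      ((hPprime.mem_or_mem hy).resolve_left (hx' P hP))
  rw [hPbot] at hPprime
  exact .of_bot_isPrime R

theorem isDomain_of_maximalIdeal_mem_minimalPrimes [IsRegularLocalRing R]
    (h : maximalIdeal R ∈ minimalPrimes R) : IsDomain R := by
  have hrank : (maximalIdeal R).spanFinrank = 0 := by
    have hheight := IsRegularLocalRing.spanFinrank_maximalIdeal (R := R)
    rw [← maximalIdeal_height_eq_ringKrullDim, Ideal.height_eq_zero_iff.mpr h] at hheight
    exact_mod_cast hheight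
  have hbot := (Submodule.spanFinrank_eq_zero_iff_eq_bot (IsNoetherian.noetherian _)).mp hrank
  exact (isField_iff_maximalIdeal_eq.mpr hbot).isDomain

theorem isDomain_of_isRegularLocalRing [IsRegularLocalRing R] : IsDomain R := by
  induction hn : (maximalIdeal R).spanFinrank using Nat.strong_induction_on generalizing R with
  | _ n ih =>
    by_cases h : maximalIdeal R ∈ minimalPrimes R
    · exact isDomain_of_maximalIdeal_mem_minimalPrimes h
    obtain ⟨x, hx, hx_sq, hx_min⟩ := exists_mem_maximalIdeal_notMem_sq_notMem_minimalPrimes h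
    have := isRegularLocalRing_quotient_span_singleton hx hx_sq
    have hlt : (maximalIdeal (R ⧸ Ideal.span {x})).spanFinrank < n := by
      rw [← hn, ← map_maximalIdeal_of_surjective _ Ideal.Quotient.mk_surjective]
      exact spanFinrank_map_quotientMk_add_one_le (IsNoetherian.noetherian _) hx
        (by rwa [← pow_two])
    have hdomain := ih _ hlt rfl
    exact isDomain_of_isPrime_span_singleton (maximalIdeal_le_jacobson ⊥ hx) hx_min
      ((Ideal.Quotient.isDomain_iff_prime _).mp hdomain)

theorem isRegularLocalRing_of_span_range_eq_maximalIdeal [IsNoetherianRing R] [IsLocalRing R]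
    {d : ℕ} {v : Fin d → R} (hv : Ideal.span (Set.range v) = maximalIdeal R)
    (hd : ringKrullDim R = d) : IsRegularLocalRing R := by
  apply IsRegularLocalRing.of_spanFinrank_maximalIdeal_le
  rw [← hv, hd]
  norm_cast
  calc (Ideal.span (Set.range v)).spanFinrank
      ≤ (Set.range v).ncard := Submodule.spanFinrank_span_le_ncard_of_finite (Set.finite_range v)
    _ ≤ d := by simpa [← Set.image_univ, Set.ncard_univ] using
        Set.ncard_image_le (f := v) Set.finite_univ

end RegularLocalRing

section WittVector

open WittVector

variable {p : ℕ} [Fact p.Prime] {R : Type*} [CommRing R]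

theorem teichmuller_add_verschiebung_shift (a : WittVector p R) :
    teichmuller p (a.coeff 0) + verschiebung (a.shift 1) = a := by
  ext n
  rw [coeff_add_of_disjoint]
  · cases n with
    | zero => simp
    | succ n => simp [teichmuller_coeff_pos, shift_coeff, verschiebung_coeff_succ, add_comm]
  · rintro (_ | n)
    · exact .inr (verschiebung_coeff_zero _)
    · exact .inl (teichmuller_coeff_pos p _ _ n.succ_pos)

theorem frobenius_teichmuller [CharP R p] (x : R) :
    WittVector.frobenius (teichmuller p x) = teichmuller p (x ^ p) := by
  rw [frobenius_eq_map_frobenius, map_teichmuller, frobenius_def]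

theorem teichmuller_mul_eq_add_verschiebung [CharP R p] (x : R) (a : WittVector p R) :
    teichmuller p x * a =
      teichmuller p (x * a.coeff 0) + verschiebung (teichmuller p (x ^ p) * a.shift 1) := by
  conv_lhs => rw [← teichmuller_add_verschiebung_shift a]
  rw [mul_add, map_mul, ← frobenius_teichmuller, mul_comm (WittVector.frobenius _),
    verschiebung_mul_frobenius, mul_comm (verschiebung _)]

theorem coeff_teichmuller_mul [CharP R p] (x : R) (a : WittVector p R) (n : ℕ) :
    (teichmuller p x * a).coeff n = x ^ p ^ n * a.coeff n := by
  induction n generalizing x a with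
  | zero => simp [mul_coeff_zero]
  | succ n ih =>
    rw [teichmuller_mul_eq_add_verschiebung, coeff_add_of_disjoint]
    · rw [teichmuller_coeff_pos p _ _ n.succ_pos, zero_add, verschiebung_coeff_succ, ih,
        shift_coeff, ← pow_mul, ← pow_succ', add_comm 1 n]
    · rintro (_ | k)
      · exact .inr (verschiebung_coeff_zero _)
      · exact .inl (teichmuller_coeff_pos p _ _ k.succ_pos)

theorem truncate_eq_truncate_iff {m : ℕ} {a b : WittVector p R} :
    truncate m a = truncate m b ↔ ∀ j < m, a.coeff j = b.coeff j := by
  simp only [TruncatedWittVector.ext_iff, coeff_truncate, Fin.forall_iff]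

theorem forall_coeff_mem_range_iff {A : Type*} [CommRing A] (f : A →+* R) {m : ℕ}
    {a : WittVector p R} :
    (∀ j < m, a.coeff j ∈ Set.range f) ↔ truncate m a ∈ ((truncate m).comp (map f)).range := by
  simp only [RingHom.mem_range, RingHom.comp_apply, truncate_eq_truncate_iff, map_coeff]
  constructor
  · intro h
    choose! g hg using h
    exact ⟨mk p g, fun j hj ↦ by rw [coeff_mk, hg j hj]⟩
  · rintro ⟨b, hb⟩ j hj
    exact ⟨_, hb j hj⟩

end WittVector

/-- The image of `A` in the `A`-algebra `K` is closed under those `p`-th roots that exist in `K`. -/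
def IsPthRootClosed (p : ℕ) (A K : Type*) [CommRing A] [CommRing K] [Algebra A K] : Prop :=
  ∀ y : K, y ^ p ∈ Set.range (algebraMap A K) → y ∈ Set.range (algebraMap A K)

theorem IsPthRootClosed.pow_mem_range_iff {p : ℕ} {A K : Type*} [CommRing A] [CommRing K]
    [Algebra A K] (h : IsPthRootClosed p A K) {y : K} (k : ℕ) :
    y ^ p ^ k ∈ Set.range (algebraMap A K) ↔ y ∈ Set.range (algebraMap A K) := by
  refine ⟨fun hy ↦ ?_, fun hy ↦ pow_mem (S := (algebraMap A K).range) hy _⟩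
  induction k with
  | zero => simpa using hy
  | succ k ih => exact ih (h _ (by rwa [← pow_mul, ← pow_succ]))

section Localization

variable {A K : Type*} [CommRing A] [CommRing K] [Algebra A K] {π : A} [IsLocalization.Away π K]

variable (K) in
theorem algebraMap_injective_of_isLocalization_away (hπ : π ∈ nonZeroDivisors A) :
    Function.Injective (algebraMap A K) :=
  IsLocalization.injective K (Submonoid.powers_le.mpr hπ)

theorem mem_range_of_mul_mem_range {p r : ℕ} (hπ : π ∈ nonZeroDivisors A)
    (hrad : (Ideal.span {π}).IsRadical) (hr : r < p) {y : K}
    (hy : algebraMap A K π ^ r * y ^ p ∈ Set.range (algebraMap A K))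
    (hπy : algebraMap A K π * y ∈ Set.range (algebraMap A K)) :
    y ∈ Set.range (algebraMap A K) := by
  obtain ⟨g, hg⟩ := hy
  obtain ⟨f, hf⟩ := hπy
  have hpow : f ^ p = π * (π ^ (p - r - 1) * g) := by
    apply algebraMap_injective_of_isLocalization_away (π := π) K hπ
    have hexp : p = 1 + (p - r - 1) + r := by lia
    rw [map_pow, hf, map_mul, map_mul, map_pow, hg, mul_pow]
    nth_rewrite 1 [hexp]
    rw [pow_add, pow_add, pow_one]
    simp only [mul_assoc]
  obtain ⟨f', rfl⟩ : π ∣ f := by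
    rw [← Ideal.mem_span_singleton]
    exact hrad ⟨p, Ideal.mem_span_singleton.mpr ⟨_, hpow⟩⟩
  refine ⟨f', (IsLocalization.Away.algebraMap_isUnit (S := K) π).mul_left_cancel ?_⟩
  rw [← hf, map_mul]

theorem mem_range_of_pow_mul_pow_mem_range {p r : ℕ} (hπ : π ∈ nonZeroDivisors A)
    (hrad : (Ideal.span {π}).IsRadical) (hr : r < p) {y : K}
    (hy : algebraMap A K π ^ r * y ^ p ∈ Set.range (algebraMap A K)) :
    y ∈ Set.range (algebraMap A K) := by
  obtain ⟨k, f, hf⟩ := IsLocalization.Away.surj π y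
  have hk : algebraMap A K π ^ k * y ∈ Set.range (algebraMap A K) := ⟨f, by rw [mul_comm, hf]⟩
  clear hf
  induction k with
  | zero => simpa using hk
  | succ k ih =>
    refine ih (mem_range_of_mul_mem_range hπ hrad hr ?_ (by rwa [← mul_assoc, ← pow_succ']))
    rw [mul_pow, mul_left_comm, ← pow_mul, ← map_pow]
    exact mul_mem (s := (algebraMap A K).range) ⟨_, rfl⟩ hy

variable (K) in
theorem isPthRootClosed_of_isLocalization_away {p : ℕ} (hp : 0 < p) (hπ : π ∈ nonZeroDivisors A)
    (hrad : (Ideal.span {π}).IsRadical) : IsPthRootClosed p A K := fun y hy ↦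
  mem_range_of_pow_mul_pow_mem_range hπ hrad hp (by rwa [pow_zero, one_mul])

end Localization

namespace WittFil

variable {p : ℕ} [Fact p.Prime] {A K : Type*} [CommRing A] [CommRing K] [Algebra A K] {m : ℕ}

theorem mul_left {x c : K} (hc : c ∈ Set.range (algebraMap A K)) {a : WittVector p K}
    (ha : WittFil p A x m a) : WittFil p A (c * x) m a := fun j hj ↦ by
  rw [mul_assoc]
  exact mul_mem (s := (algebraMap A K).range) hc (ha j hj)

theorem mono {π : A} {N M : ℕ} (h : N ≤ M) {a : WittVector p K}
    (ha : WittFil p A (algebraMap A K π ^ N) m a) : WittFil p A (algebraMap A K π ^ M) m a := by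
  rw [← Nat.sub_add_cancel h, pow_add]
  exact ha.mul_left ⟨π ^ (M - N), map_pow _ _ _⟩

theorem exists_pow (π : A) [IsLocalization.Away π K] (a : WittVector p K) :
    ∃ N : ℕ, WittFil p A (algebraMap A K π ^ N) m a := by
  obtain ⟨⟨_, N, rfl⟩, hN⟩ := IsLocalization.exist_integer_multiples (Submonoid.powers π)
    (Finset.range m) fun j ↦ a.coeff j ^ p ^ (m - 1 - j)
  refine ⟨N, fun j hj ↦ ?_⟩
  simpa [Algebra.smul_def, IsLocalization.IsInteger] using hN j (Finset.mem_range.mpr hj)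

section AddSubgroup

variable [CharP K p] {x : K} {a b : WittVector p K}

theorem iff_truncate_mem_range (h : IsPthRootClosed p A K) :
    WittFil p A x m a ↔
      WittVector.truncate m (WittVector.teichmuller p x * WittVector.frobenius^[m - 1] a) ∈
        ((WittVector.truncate m).comp (WittVector.map (algebraMap A K))).range := by
  rw [← forall_coeff_mem_range_iff]
  refine forall₂_congr fun j hj ↦ ?_
  rw [coeff_teichmuller_mul, WittVector.iterate_frobenius_coeff, ← h.pow_mem_range_iff j, mul_pow,
    ← pow_mul, ← pow_add, Nat.sub_add_cancel (by lia)]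

theorem add (h : IsPthRootClosed p A K) (ha : WittFil p A x m a) (hb : WittFil p A x m b) :
    WittFil p A x m (a + b) := by
  rw [iff_truncate_mem_range h] at *
  rw [iterate_map_add, mul_add, map_add]
  exact add_mem ha hb

theorem sub (h : IsPthRootClosed p A K) (ha : WittFil p A x m a) (hb : WittFil p A x m b) :
    WittFil p A x m (a - b) := by
  rw [iff_truncate_mem_range h] at *
  rw [iterate_map_sub, mul_sub, map_sub]
  exact sub_mem ha hb

end AddSubgroup

section Frobenius

variable [CharP K p] {π : A} [IsLocalization.Away π K] {b : WittVector p K}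

theorem of_frobenius (hπ : π ∈ nonZeroDivisors A) (hrad : (Ideal.span {π}).IsRadical) {N : ℕ}
    (h : WittFil p A (algebraMap A K π ^ N) m (WittVector.frobenius b)) :
    WittFil p A (algebraMap A K π ^ (N / p)) m b := fun j hj ↦ by
  refine mem_range_of_pow_mul_pow_mem_range hπ hrad (Nat.mod_lt N (Fact.out : p.Prime).pos) ?_
  convert! h j hj using 1
  rw [WittVector.coeff_frobenius_charP, mul_pow, ← mul_assoc, ← pow_mul, ← pow_add, pow_right_comm,
    mul_comm (N / p), Nat.mod_add_div]

theorem of_frobenius_sub (hπ : π ∈ nonZeroDivisors A) (hrad : (Ideal.span {π}).IsRadical) {n : ℕ}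
    (h : WittFil p A (algebraMap A K π ^ n) m (WittVector.frobenius b - b)) :
    WittFil p A (algebraMap A K π ^ n) m b := by
  have hp := (Fact.out : p.Prime)
  have hroot := isPthRootClosed_of_isLocalization_away (π := π) K hp.pos hπ hrad
  obtain ⟨N, hN⟩ := exists_pow (m := m) π b
  induction N using Nat.strong_induction_on with
  | _ N ih =>
    rcases le_or_gt N n with hle | hlt
    · exact hN.mono hle
    · have hF : WittFil p A (algebraMap A K π ^ N) m (WittVector.frobenius b) := by
        simpa only [sub_add_cancel] using (h.mono hlt.le).add hroot hN
      exact ih (N / p) (Nat.div_lt_self (by lia) hp.one_lt) (hF.of_frobenius hπ hrad)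

end Frobenius

end WittFil

theorem wittFil_one_sub_cartier_iff_general (p : ℕ) [Fact p.Prime]
    {A K : Type*} [CommRing A] [CharP A p] [CommRing K] [Algebra A K]
    {π : A} (hπ : π ∈ nonZeroDivisors A) (hrad : (Ideal.span {π}).IsRadical)
    [IsLocalization.Away π K] (m n : ℕ) (φ : K →+* K) (hφ : ∀ y : K, φ y = y ^ p)
    (b : WittVector p K) :
    WittFil p A (algebraMap A K π ^ n) m (WittVector.map φ b - b) ↔
      WittFil p A (algebraMap A K π ^ n) m (WittVector.map φ b) := by
  have : CharP K p :=
    charP_of_injective_ringHom (algebraMap_injective_of_isLocalization_away (π := π) K hπ) p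
  obtain rfl : φ = frobenius K p := RingHom.ext hφ
  rw [← WittVector.frobenius_eq_map_frobenius]
  have hroot := isPthRootClosed_of_isLocalization_away (π := π) K (Fact.out : p.Prime).pos hπ hrad
  constructor
  · intro h
    simpa only [sub_add_cancel] using h.add hroot (h.of_frobenius_sub hπ hrad)
  · intro h
    exact h.sub hroot ((h.of_frobenius hπ hrad).mono (Nat.div_le_self n p))

section PowerSeries

variable {S : Type*} [CommRing S]

theorem charP_powerSeries (p : ℕ) [CharP S p] : CharP (PowerSeries S) p :=
  charP_of_injective_ringHom PowerSeries.C_injective p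

theorem powerSeries_X_mem_nonZeroDivisors : (PowerSeries.X : PowerSeries S) ∈ nonZeroDivisors _ :=
  mem_nonZeroDivisors_iff_right.mpr fun f hf ↦
    PowerSeries.X_mul_cancel (by rw [mul_comm, hf, mul_zero])

theorem isRadical_span_powerSeries_X [IsReduced S] :
    (Ideal.span {(PowerSeries.X : PowerSeries S)}).IsRadical := by
  have hker : RingHom.ker (PowerSeries.constantCoeff (R := S)) = Ideal.span {PowerSeries.X} := by
    ext f
    rw [RingHom.mem_ker, Ideal.mem_span_singleton, PowerSeries.X_dvd_iff]
  rw [← hker]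
  exact (RingHom.ker_isRadical_iff_reduced_of_surjective
    PowerSeries.constantCoeff_surj).mpr inferInstance

end PowerSeries

/-- Let `S` be an `F`-finite Noetherian regular local ring of
characteristic `p`, `A = S⟦π⟧`, `K = A_π`, `m ≥ 1` and `n ≥ 0`.  Let
`φ : 𝕎 K → 𝕎 K` be induced by the Frobenius `y ↦ y^p` of `K`.  Then for every
`b ∈ 𝕎 K`: `φ(b) - b` satisfies `fil(π^n, m)` iff `φ(b)` satisfies `fil(π^n, m)`.
(The `q = 0` case of: `(1-C)(ω) ∈ fil_n W_m Ω^q_K ↔ ω ∈ Z₁ fil_n W_m Ω^q_K` for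
`ω = F(b)`, since `(1-C)(F(b)) = F(b) - R(b)`.) -/
theorem wittFil_one_sub_cartier_iff
    (p : ℕ) [Fact p.Prime]
    (S : Type*) [CommRing S] [IsNoetherianRing S] [IsLocalRing S] [CharP S p]
    (hreg : ∃ (d : ℕ) (v : Fin d → S),
      Ideal.span (Set.range v) = IsLocalRing.maximalIdeal S ∧ ringKrullDim S = d)
    (hF : (frobenius S p).Finite)
    (K : Type*) [CommRing K] [Algebra (PowerSeries S) K]
    [IsLocalization.Away (PowerSeries.X : PowerSeries S) K]
    (m : ℕ) (hm : 1 ≤ m) (n : ℕ)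
    (φ : K →+* K) (hφ : ∀ y : K, φ y = y ^ p) :
    ∀ b : WittVector p K,
      WittFil p (PowerSeries S) ((algebraMap (PowerSeries S) K PowerSeries.X) ^ n) m
        (WittVector.map φ b - b) ↔
      WittFil p (PowerSeries S) ((algebraMap (PowerSeries S) K PowerSeries.X) ^ n) m
        (WittVector.map φ b) := by
  obtain ⟨d, v, hv, hd⟩ := hreg
  have := isRegularLocalRing_of_span_range_eq_maximalIdeal hv hd
  have : IsDomain S := isDomain_of_isRegularLocalRing
  have hX := powerSeries_X_mem_nonZeroDivisors (S := S)
  have hrad := isRadical_span_powerSeries_X (S := S)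
  have := charP_powerSeries (S := S) p
  exact wittFil_one_sub_cartier_iff_general p hX hrad m n φ hφ
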